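/- arXiv:2505.01665 — 5 statements merged into one kernel-verified Lean document; each statement's English description precedes it below -/
import Mathlib

section
/- (Training Effectiveness) Let q ≥ 2 and γ_k = 1/2 − ρ_k. Then (1/N)·∑_{n=1}^N 𝟙(g_K(n) ≤ 0) ≤ (1/N)·∑_{n=1}^N exp(−g_K(n)) = ∏_{k=1}^K Z_k ≤ exp(−(4/q)·∑_{k=1}^K γ_k²), where 𝟙(·) is the indicator function. -/
/-!
Write `x = ∑ w β` for the mean of `β` in one round. Since `exp` is convex, the normalizer satisfies
`Z ≤ cosh α - x sinh α`. Here `α = s * artanh x` with `s = 2 / q ≤ 1`, and concavity of `t ↦ t ^ s`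
bounds the right-hand side by the `s`-th power of its value at `α = artanh x`, which is
`√(1 - x²) ≤ exp (-x² / 2)`. The weights telescope, so the bounds of the single rounds multiply.
-/

section

open Finset Real

variable {ι : Type*} [Fintype ι]

lemma cosh_mul_sub_mul_sinh_mul_le_rpow {s x : ℝ} (hs₀ : 0 ≤ s) (hs₁ : s ≤ 1) (hx : |x| ≤ 1)
    (a : ℝ) : cosh (s * a) - x * sinh (s * a) ≤ (cosh a - x * sinh a) ^ s := by
  obtain ⟨hx_lower, hx_upper⟩ := abs_le.1 hx
  have cosh_sub (t : ℝ) :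
      cosh t - x * sinh t = (1 - x) / 2 * exp t + (1 + x) / 2 * exp (-t) := by
    rw [cosh_eq, sinh_eq]; ring
  rw [cosh_sub, cosh_sub, ← mul_neg, mul_comm s a, mul_comm s (-a), exp_mul, exp_mul]
  exact (concaveOn_rpow hs₀ hs₁).2 (exp_pos a).le (exp_pos (-a)).le
    (by linarith) (by linarith) (by ring)

lemma cosh_artanh_sub_mul_sinh_artanh {x : ℝ} (hx : x ∈ Set.Ioo (-1) 1) :
    cosh (artanh x) - x * sinh (artanh x) = √(1 - x ^ 2) := by
  rw [cosh_artanh hx, sinh_artanh hx, ← mul_div_assoc, ← sub_div, ← sq, div_sqrt]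

lemma sqrt_one_sub_sq_le_exp (x : ℝ) : √(1 - x ^ 2) ≤ exp (-(x ^ 2 / 2)) := by
  rw [← neg_div, exp_half]
  exact sqrt_le_sqrt (one_sub_le_exp_neg _)

lemma cosh_mul_artanh_sub_mul_sinh_mul_artanh_le_exp {s x : ℝ} (hs₀ : 0 ≤ s) (hs₁ : s ≤ 1)
    (hx : x ∈ Set.Ioo (-1) 1) :
    cosh (s * artanh x) - x * sinh (s * artanh x) ≤ exp (-(s * x ^ 2 / 2)) :=
  calc cosh (s * artanh x) - x * sinh (s * artanh x)
    _ ≤ (cosh (artanh x) - x * sinh (artanh x)) ^ s :=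
      cosh_mul_sub_mul_sinh_mul_le_rpow hs₀ hs₁ (abs_lt.2 hx).le _
    _ = √(1 - x ^ 2) ^ s := by rw [cosh_artanh_sub_mul_sinh_artanh hx]
    _ ≤ exp (-(x ^ 2 / 2)) ^ s := by gcongr; exact sqrt_one_sub_sq_le_exp x
    _ = exp (-(s * x ^ 2 / 2)) := by rw [← exp_mul]; ring_nf

lemma log_one_sub_div_self {r : ℝ} (hr : r ∈ Set.Icc 0 1) :
    log ((1 - r) / r) = 2 * artanh (1 - 2 * r) := by
  have ratio_eq : (1 + (1 - 2 * r)) / (1 - (1 - 2 * r)) = (1 - r) / r := by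
    rw [← mul_div_mul_left (1 - r) r two_ne_zero]; ring_nf
  rw [artanh_eq_half_log ⟨by linarith [hr.2], by linarith [hr.1]⟩, ratio_eq]
  ring

lemma sum_mul_exp_pos {w : ι → ℝ} (hw : w ∈ stdSimplex ℝ ι) (u : ι → ℝ) :
    0 < ∑ i, w i * exp (u i) := by
  obtain ⟨i, hi, hwi⟩ := exists_lt_of_sum_lt (s := univ) (f := 0) (g := w) (by simp [hw.2])
  exact sum_pos' (fun j _ ↦ mul_nonneg (hw.1 j) (exp_pos _).le) ⟨i, hi, mul_pos hwi (exp_pos _)⟩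

lemma sum_mul_exp_neg_mul_le_cosh_sub {w β : ι → ℝ} (hw : w ∈ stdSimplex ℝ ι) (hβ : ∀ i, |β i| ≤ 1)
    (a : ℝ) :
    ∑ i, w i * exp (-a * β i) ≤ cosh a - (∑ i, w i * β i) * sinh a :=
  calc ∑ i, w i * exp (-a * β i)
    _ ≤ ∑ i, w i * (cosh a - β i * sinh a) := by
      refine sum_le_sum fun i _ ↦ mul_le_mul_of_nonneg_left ?_ (hw.1 i)
      simpa [mul_comm, ← sub_eq_add_neg] using exp_mul_le_cosh_add_mul_sinh (hβ i) (-a)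
    _ = cosh a - (∑ i, w i * β i) * sinh a := by
      simp only [mul_sub, sum_sub_distrib, ← sum_mul, ← mul_assoc, hw.2, one_mul]

lemma sum_mul_indicator_nonpos_le_sum_mul_exp_neg {w : ι → ℝ} (hw : ∀ i, 0 ≤ w i) (g : ι → ℝ) :
    ∑ i, w i * (if g i ≤ 0 then 1 else 0) ≤ ∑ i, w i * exp (-g i) := by
  refine sum_le_sum fun i _ ↦ mul_le_mul_of_nonneg_left ?_ (hw i)
  split_ifs with hg
  · exact one_le_exp (neg_nonneg.2 hg)
  · exact (exp_pos _).le

lemma sum_filter_eq_neg_one {β : ι → ℝ} (hβ : ∀ i, β i = 1 ∨ β i = -1) (w : ι → ℝ) :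
    ∑ i with β i = -1, w i = ∑ i, w i * ((1 - β i) / 2) := by
  rw [sum_filter]
  refine sum_congr rfl fun i _ ↦ ?_
  rcases hβ i with h | h <;> norm_num [h]

/-- Multiplicative weights: `w k` is the distribution before round `k`, which multiplies the weight
of `i` by `exp (u k i)` and divides by the normalizer `Z k`. Rounds are numbered from `0`. -/
structure IsMultiplicativeWeights (w : ℕ → ι → ℝ) (Z : ℕ → ℝ) (u : ℕ → ι → ℝ) : Prop where
  zero_mem : w 0 ∈ stdSimplex ℝ ι
  normalizer_eq : ∀ k, Z k = ∑ i, w k i * exp (u k i)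
  succ_eq : ∀ k i, w (k + 1) i = w k i * exp (u k i) / Z k

namespace IsMultiplicativeWeights

variable {w u : ℕ → ι → ℝ} {Z : ℕ → ℝ}

lemma mem_stdSimplex (h : IsMultiplicativeWeights w Z u) (k : ℕ) : w k ∈ stdSimplex ℝ ι := by
  induction k with
  | zero => exact h.zero_mem
  | succ k ih =>
    have hZ : 0 < Z k := h.normalizer_eq k ▸ sum_mul_exp_pos ih (u k)
    refine ⟨fun i ↦ ?_, ?_⟩
    · rw [h.succ_eq]
      exact div_nonneg (mul_nonneg (ih.1 i) (exp_pos _).le) hZ.le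
    · simp only [h.succ_eq]
      rw [← sum_div, ← h.normalizer_eq, div_self hZ.ne']

lemma normalizer_pos (h : IsMultiplicativeWeights w Z u) (k : ℕ) : 0 < Z k :=
  h.normalizer_eq k ▸ sum_mul_exp_pos (h.mem_stdSimplex k) (u k)

lemma mul_prod_normalizer (h : IsMultiplicativeWeights w Z u) (K : ℕ) (i : ι) :
    w K i * ∏ k ∈ range K, Z k = w 0 i * exp (∑ k ∈ range K, u k i) := by
  induction K with
  | zero => simp
  | succ K ih =>
    rw [prod_range_succ_comm, sum_range_succ, exp_add, ← mul_assoc, ← mul_assoc, ← ih, h.succ_eq,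
      div_mul_cancel₀ _ (h.normalizer_pos K).ne', mul_right_comm]

lemma sum_mul_exp_eq_prod_normalizer (h : IsMultiplicativeWeights w Z u) (K : ℕ) :
    ∑ i, w 0 i * exp (∑ k ∈ range K, u k i) = ∏ k ∈ range K, Z k := by
  simp_rw [← h.mul_prod_normalizer]
  rw [← sum_mul, (h.mem_stdSimplex K).2, one_mul]

lemma normalizer_le_exp {β : ℕ → ι → ℝ} {α : ℕ → ℝ}
    (h : IsMultiplicativeWeights w Z fun k i ↦ -α k * β k i) {k : ℕ} (hβ : ∀ i, |β k i| ≤ 1)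
    {s x : ℝ} (hs₀ : 0 ≤ s) (hs₁ : s ≤ 1) (hx : x ∈ Set.Ioo (-1) 1)
    (hedge : ∑ i, w k i * β k i = x) (hα : α k = s * artanh x) :
    Z k ≤ exp (-(s * x ^ 2 / 2)) :=
  calc Z k
    _ ≤ cosh (α k) - (∑ i, w k i * β k i) * sinh (α k) :=
      h.normalizer_eq k ▸ sum_mul_exp_neg_mul_le_cosh_sub (h.mem_stdSimplex k) hβ (α k)
    _ = cosh (s * artanh x) - x * sinh (s * artanh x) := by rw [hedge, hα]
    _ ≤ exp (-(s * x ^ 2 / 2)) := cosh_mul_artanh_sub_mul_sinh_mul_artanh_le_exp hs₀ hs₁ hx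

end IsMultiplicativeWeights

/-- If `β k` takes only the values `±1`, then `ρ k` is the weight of `{i | β k i = -1}`. -/
theorem stmt_2_general {q : ℝ} (hq : 2 ≤ q) {w β : ℕ → ι → ℝ} {α ρ γ Z : ℕ → ℝ}
    (hβ : ∀ k i, |β k i| ≤ 1) (hw : IsMultiplicativeWeights w Z fun k i ↦ -α k * β k i)
    (hρ : ∀ k, ρ k = ∑ i, w k i * ((1 - β k i) / 2)) (hρ₀ : ∀ k, 0 < ρ k) (hρ₁ : ∀ k, ρ k < 1)
    (hα : ∀ k, α k = 1 / q * log ((1 - ρ k) / ρ k)) (hγ : ∀ k, γ k = 1 / 2 - ρ k) (K : ℕ) :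
    (∑ i, w 0 i * (if ∑ k ∈ range K, α k * β k i ≤ 0 then 1 else 0)
      ≤ ∑ i, w 0 i * exp (-∑ k ∈ range K, α k * β k i)) ∧
    (∑ i, w 0 i * exp (-∑ k ∈ range K, α k * β k i) = ∏ k ∈ range K, Z k) ∧
    (∏ k ∈ range K, Z k ≤ exp (-(4 / q) * ∑ k ∈ range K, γ k ^ 2)) := by
  refine ⟨sum_mul_indicator_nonpos_le_sum_mul_exp_neg hw.zero_mem.1 _, ?_, ?_⟩
  · simpa only [neg_mul, sum_neg_distrib] using hw.sum_mul_exp_eq_prod_normalizer K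
  have edge_eq (k : ℕ) : ∑ i, w k i * β k i = 1 - 2 * ρ k := by
    simp only [hρ, mul_div_assoc', mul_sub, mul_one, ← sum_div, sum_sub_distrib,
      (hw.mem_stdSimplex k).2]
    ring
  have hZ (k : ℕ) : Z k ≤ exp (-(4 / q) * γ k ^ 2) := by
    have hstep := hw.normalizer_le_exp (hβ k) (s := 2 / q) (by positivity)
      (div_le_one_of_le₀ hq (by positivity)) ⟨by linarith [hρ₁ k], by linarith [hρ₀ k]⟩ (edge_eq k)
      (by rw [hα, log_one_sub_div_self ⟨(hρ₀ k).le, (hρ₁ k).le⟩]; ring)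
    refine hstep.trans_eq (congrArg exp ?_)
    rw [hγ]; ring
  rw [mul_sum, exp_sum]
  exact prod_le_prod (fun k _ ↦ (hw.normalizer_pos k).le) fun k _ ↦ hZ k

end

/-- Training Effectiveness (Theorem): with the APW weighting scheme,
`(1/N)·∑ₙ 𝟙(g_K(n) ≤ 0) ≤ (1/N)·∑ₙ exp(−g_K(n)) = ∏_{k=1}^K Z_k
  ≤ exp(−(4/q)·∑_{k=1}^K γ_k²)`. -/
theorem stmt_2 (N : ℕ) (hN : 1 ≤ N) (q : ℝ) (hq : 2 ≤ q)
    (β : ℕ → Fin N → ℝ) (α ρ γ Z : ℕ → ℝ) (w : ℕ → Fin N → ℝ)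
    (hβ : ∀ k n, β (k + 1) n = 1 ∨ β (k + 1) n = -1)
    (hw0 : ∀ n, w 0 n = 1 / N)
    (hZ : ∀ k, Z (k + 1) = ∑ n, w k n * Real.exp (-(α (k + 1)) * β (k + 1) n))
    (hwrec : ∀ k n,
      w (k + 1) n = w k n * Real.exp (-(α (k + 1)) * β (k + 1) n) / Z (k + 1))
    (hρ : ∀ k, ρ (k + 1) =
      ∑ n ∈ Finset.univ.filter (fun n => β (k + 1) n = -1), w k n)
    (hρ0 : ∀ k, 0 < ρ (k + 1)) (hρ1 : ∀ k, ρ (k + 1) < 1)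
    (hα : ∀ k, α (k + 1) = (1 / q) * Real.log ((1 - ρ (k + 1)) / ρ (k + 1)))
    (hγ : ∀ k, γ (k + 1) = 1 / 2 - ρ (k + 1))
    (K : ℕ) (hK : 1 ≤ K) :
    ((1 / (N : ℝ)) * ∑ n,
        (if (∑ k ∈ Finset.range K, α (k + 1) * β (k + 1) n) ≤ 0 then (1 : ℝ) else 0)
      ≤ (1 / (N : ℝ)) * ∑ n,
        Real.exp (-(∑ k ∈ Finset.range K, α (k + 1) * β (k + 1) n))) ∧
    ((1 / (N : ℝ)) * ∑ n,
        Real.exp (-(∑ k ∈ Finset.range K, α (k + 1) * β (k + 1) n))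
      = ∏ k ∈ Finset.range K, Z (k + 1)) ∧
    (∏ k ∈ Finset.range K, Z (k + 1)
      ≤ Real.exp (-(4 / q) * ∑ k ∈ Finset.range K, (γ (k + 1)) ^ 2)) := by
  have : Nonempty (Fin N) := ⟨0, hN⟩
  have hw : w 0 ∈ stdSimplex ℝ (Fin N) := by
    simpa [funext hw0, stdSimplex.barycenter] using
      (stdSimplex.barycenter : stdSimplex ℝ (Fin N)).2
  simpa only [hw0, Finset.mul_sum] using
    stmt_2_general hq (fun k n ↦ (abs_eq_abs.2 (hβ k n)).le.trans_eq abs_one) ⟨hw, hZ, hwrec⟩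
      (fun k ↦ (hρ k).trans (sum_filter_eq_neg_one (hβ k) (w k))) hρ0 hρ1 hα hγ K
end

section
/- Let q ≥ 2, let ρ ∈ (0,1), set γ = 1/2 − ρ and α = (1/q)·log((1−ρ)/ρ). Then (1−ρ)·exp(−α) + ρ·exp(α) ≤ exp(−4γ²/q). -/
/-!
Put `L = log ((1 - ρ) / ρ)` and let `X` take the value `-L / 2` with probability `1 - ρ` and
`L / 2` with probability `ρ`, so that the left-hand side is `E[exp (p X)]` for `p = 2 / q ≤ 1`.
Concavity of `x ↦ x ^ p` bounds it by `E[exp X] ^ p`, and `E[exp X]` is the Bhattacharyya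
coefficient `2 √((1 - ρ) ρ) = √(1 - 4γ²) ≤ exp (-2γ²)`.
-/

open Real

lemma sum_mul_exp_mul_le_rpow_sum_mul_exp {ι : Type*} (s : Finset ι) (w x : ι → ℝ) {p : ℝ}
    (hw : ∀ i ∈ s, 0 ≤ w i) (hw_sum : ∑ i ∈ s, w i = 1) (hp₀ : 0 ≤ p) (hp₁ : p ≤ 1) :
    ∑ i ∈ s, w i * exp (x i * p) ≤ (∑ i ∈ s, w i * exp (x i)) ^ p := by
  simpa only [smul_eq_mul, exp_mul] using
    (concaveOn_rpow hp₀ hp₁).le_map_sum hw hw_sum fun i _ ↦ (exp_pos (x i)).le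

lemma mul_exp_neg_half_log_add_mul_exp_half_log {a b : ℝ} (ha : 0 < a) (hb : 0 < b) :
    a * exp (-(log (a / b) / 2)) + b * exp (log (a / b) / 2) = 2 * √(a * b) := by
  have exp_half_log : exp (log (a / b) / 2) = √a / √b := by
    rw [exp_half, exp_log (div_pos ha hb), sqrt_div ha.le]
  calc a * exp (-(log (a / b) / 2)) + b * exp (log (a / b) / 2)
      = a * (√b / √a) + b * (√a / √b) := by rw [exp_neg, exp_half_log, inv_div]
    _ = a / √a * √b + b / √b * √a := by ring
    _ = 2 * √(a * b) := by rw [div_sqrt, div_sqrt, sqrt_mul ha.le]; ring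

lemma sqrt_le_exp_sub_one_div_two (x : ℝ) : √x ≤ exp ((x - 1) / 2) := by
  rw [exp_half]
  exact sqrt_le_sqrt (by linarith [add_one_le_exp (x - 1)])

lemma two_mul_sqrt_mul_le_exp {a b : ℝ} (hab : a + b = 1) :
    2 * √(a * b) ≤ exp (-(a - b) ^ 2 / 2) := by
  have four_mul_eq : 2 ^ 2 * (a * b) = 1 - (a - b) ^ 2 := by
    linear_combination (a + b + 1) * hab
  calc 2 * √(a * b) = √(1 - (a - b) ^ 2) := by
        rw [← four_mul_eq, sqrt_mul (sq_nonneg 2), sqrt_sq zero_le_two]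
    _ ≤ exp ((1 - (a - b) ^ 2 - 1) / 2) := sqrt_le_exp_sub_one_div_two _
    _ = exp (-(a - b) ^ 2 / 2) := by ring_nf

/-- For `q ≥ 2`, `ρ ∈ (0,1)`, `γ = 1/2 − ρ`, `α = (1/q)·log((1−ρ)/ρ)`:
`(1−ρ)·exp(−α) + ρ·exp(α) ≤ exp(−4γ²/q)`. -/
theorem stmt_4 (q ρ γ α : ℝ) (hq : 2 ≤ q) (hρ0 : 0 < ρ) (hρ1 : ρ < 1)
    (hγ : γ = 1 / 2 - ρ) (hα : α = (1 / q) * Real.log ((1 - ρ) / ρ)) :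
    (1 - ρ) * Real.exp (-α) + ρ * Real.exp α
      ≤ Real.exp (-(4 * γ ^ 2) / q) := by
  have hρ' : 0 < 1 - ρ := sub_pos.2 hρ1
  have hp₀ : 0 ≤ 2 / q := by positivity
  have hp₁ : 2 / q ≤ 1 := div_le_one_of_le₀ hq (by linarith)
  set L := log ((1 - ρ) / ρ) with hL
  have hαL : α = L / 2 * (2 / q) := by rw [hα]; ring
  calc (1 - ρ) * exp (-α) + ρ * exp α
      ≤ ((1 - ρ) * exp (-(L / 2)) + ρ * exp (L / 2)) ^ (2 / q) := by
        simpa [hαL] using sum_mul_exp_mul_le_rpow_sum_mul_exp Finset.univ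
          ![1 - ρ, ρ] ![-(L / 2), L / 2]
          (by simp [Fin.forall_fin_two, hρ0.le, hρ1.le]) (by simp) hp₀ hp₁
    _ = (2 * √((1 - ρ) * ρ)) ^ (2 / q) := by
        rw [hL, mul_exp_neg_half_log_add_mul_exp_half_log hρ' hρ0]
    _ ≤ exp (-(1 - ρ - ρ) ^ 2 / 2) ^ (2 / q) := by
        gcongr
        exact two_mul_sqrt_mul_le_exp (sub_add_cancel 1 ρ)
    _ = exp (-(4 * γ ^ 2) / q) := by rw [← exp_mul, hγ]; ring_nf
end

section
/- Suppose A_K > 0 and let θ > 0. Then (1/N)·|{n : m_K(n) ≤ θ}| ≤ exp(θ·A_K)·∏_{k=1}^K Z_k. -/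
/-!
Each update divides by the normalizer `Z k`, so unfolding the recursion identifies
`w K n * ∏ k < K, Z k` with `w 0 n * exp (-g n)`, where `g n = ∑ k < K, α k * β k n`. The weights
`w K` have total mass one, hence `∏ k < K, Z k` is the exponential moment `∑ n, w 0 n * exp (-g n)`,
and the claim is the Chernoff bound for the event `g n ≤ θ * ∑ k < K, α k`.
-/

/-- A multiplicative-weights process: round `k` multiplies the weight of `n` by `f k n` and divides
by the normalizer `Z k`. Both are indexed from `0`, so round `k` takes `w k` to `w (k + 1)`. -/
structure IsMultiplicativeWeights_s8 {𝕜 ι : Type*} [Semifield 𝕜] [Fintype ι]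
    (f : ℕ → ι → 𝕜) (Z : ℕ → 𝕜) (w : ℕ → ι → 𝕜) : Prop where
  normalizer_eq (k : ℕ) : Z k = ∑ n, w k n * f k n
  weight_succ (k : ℕ) (n : ι) : w (k + 1) n = w k n * f k n / Z k

namespace IsMultiplicativeWeights_s8

variable {𝕜 ι : Type*} [Semifield 𝕜] [Fintype ι]
  {f : ℕ → ι → 𝕜} {Z : ℕ → 𝕜} {w : ℕ → ι → 𝕜}

theorem weight_mul_prod_normalizer (h : IsMultiplicativeWeights_s8 f Z w) (hZ : ∀ k, Z k ≠ 0)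
    (K : ℕ) (n : ι) :
    w K n * ∏ k ∈ Finset.range K, Z k = w 0 n * ∏ k ∈ Finset.range K, f k n := by
  induction K with
  | zero => simp
  | succ K ih =>
    calc w (K + 1) n * ∏ k ∈ Finset.range (K + 1), Z k
        = w K n * f K n / Z K * ((∏ k ∈ Finset.range K, Z k) * Z K) := by
          rw [h.weight_succ, Finset.prod_range_succ]
      _ = (w K n * ∏ k ∈ Finset.range K, Z k) * f K n := by
          field_simp [hZ K]
      _ = w 0 n * ∏ k ∈ Finset.range (K + 1), f k n := by
          rw [ih, Finset.prod_range_succ, mul_assoc]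

section Ordered

variable [LinearOrder 𝕜] [IsStrictOrderedRing 𝕜]

theorem normalizer_pos_s8 (h : IsMultiplicativeWeights_s8 f Z w) {k : ℕ} (hf : ∀ n, 0 < f k n)
    (hw : w k ∈ stdSimplex 𝕜 ι) : 0 < Z k := by
  obtain ⟨n, -, hn⟩ : ∃ n ∈ Finset.univ, 0 < w k n :=
    Finset.exists_lt_of_sum_lt (by simp [hw.2])
  rw [h.normalizer_eq]
  exact Finset.sum_pos' (fun m _ ↦ mul_nonneg (hw.1 m) (hf m).le)
    ⟨n, Finset.mem_univ n, mul_pos hn (hf n)⟩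

theorem weight_mem_stdSimplex (h : IsMultiplicativeWeights_s8 f Z w) (hf : ∀ k n, 0 < f k n)
    (hw : w 0 ∈ stdSimplex 𝕜 ι) (k : ℕ) : w k ∈ stdSimplex 𝕜 ι := by
  induction k with
  | zero => exact hw
  | succ k ih =>
    have hZ : 0 < Z k := h.normalizer_pos_s8 (hf k) ih
    constructor
    · intro n
      rw [h.weight_succ]
      exact div_nonneg (mul_nonneg (ih.1 n) (hf k n).le) hZ.le
    · simp only [h.weight_succ]
      rw [← Finset.sum_div, ← h.normalizer_eq, div_self hZ.ne']

theorem prod_normalizer (h : IsMultiplicativeWeights_s8 f Z w) (hf : ∀ k n, 0 < f k n)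
    (hw : w 0 ∈ stdSimplex 𝕜 ι) (K : ℕ) :
    ∏ k ∈ Finset.range K, Z k = ∑ n, w 0 n * ∏ k ∈ Finset.range K, f k n := by
  have hwK := h.weight_mem_stdSimplex hf hw
  have hZ (k : ℕ) : Z k ≠ 0 := (h.normalizer_pos_s8 (hf k) (hwK k)).ne'
  calc ∏ k ∈ Finset.range K, Z k
      = ∑ n, w K n * ∏ k ∈ Finset.range K, Z k := by
        rw [← Finset.sum_mul, (hwK K).2, one_mul]
    _ = ∑ n, w 0 n * ∏ k ∈ Finset.range K, f k n := by
        simp only [h.weight_mul_prod_normalizer hZ]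

end Ordered

end IsMultiplicativeWeights_s8

theorem sum_filter_le_exp_mul_sum_mul_exp_neg {ι : Type*} {s : Finset ι} {p : ι → ℝ}
    (hp : ∀ n ∈ s, 0 ≤ p n) (g : ι → ℝ) (t : ℝ) :
    ∑ n ∈ s with g n ≤ t, p n ≤ Real.exp t * ∑ n ∈ s, p n * Real.exp (-g n) := by
  rw [Finset.sum_filter, Finset.mul_sum]
  refine Finset.sum_le_sum fun n hn ↦ ?_
  rw [mul_left_comm, ← Real.exp_add]
  split_ifs with hgt
  · exact le_mul_of_one_le_right (hp n hn) (Real.one_le_exp (by linarith))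
  · exact mul_nonneg (hp n hn) (Real.exp_nonneg _)

theorem stmt_8_general {ι : Type*} [Fintype ι] {α : ℕ → ℝ} {β : ℕ → ι → ℝ}
    {Z : ℕ → ℝ} {w : ℕ → ι → ℝ}
    (h : IsMultiplicativeWeights_s8 (fun k n ↦ Real.exp (-(α k) * β k n)) Z w)
    (hw : w 0 ∈ stdSimplex ℝ ι) {K : ℕ} (hA : 0 < ∑ k ∈ Finset.range K, α k) (θ : ℝ) :
    ∑ n with (∑ k ∈ Finset.range K, α k * β k n) / (∑ k ∈ Finset.range K, α k) ≤ θ, w 0 n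
      ≤ Real.exp (θ * ∑ k ∈ Finset.range K, α k) * ∏ k ∈ Finset.range K, Z k := by
  have exp_moment : ∏ k ∈ Finset.range K, Z k =
      ∑ n, w 0 n * Real.exp (-∑ k ∈ Finset.range K, α k * β k n) := by
    simp only [h.prod_normalizer (fun _ _ ↦ Real.exp_pos _) hw, ← Real.exp_sum, neg_mul,
      Finset.sum_neg_distrib]
  simp only [div_le_iff₀ hA]
  rw [exp_moment]
  exact sum_filter_le_exp_mul_sum_mul_exp_neg (fun n _ ↦ hw.1 n) _ _

/-- If `A_K > 0` and `θ > 0`, then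
`(1/N)·|{n : m_K(n) ≤ θ}| ≤ exp(θ·A_K)·∏_{k=1}^K Z_k`. -/
theorem stmt_8 (N : ℕ) (hN : 1 ≤ N) (q : ℝ) (hq : 2 ≤ q)
    (β : ℕ → Fin N → ℝ) (α ρ γ Z : ℕ → ℝ) (w : ℕ → Fin N → ℝ)
    (hβ : ∀ k n, β (k + 1) n = 1 ∨ β (k + 1) n = -1)
    (hw0 : ∀ n, w 0 n = 1 / N)
    (hZ : ∀ k, Z (k + 1) = ∑ n, w k n * Real.exp (-(α (k + 1)) * β (k + 1) n))
    (hwrec : ∀ k n,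
      w (k + 1) n = w k n * Real.exp (-(α (k + 1)) * β (k + 1) n) / Z (k + 1))
    (hρ : ∀ k, ρ (k + 1) =
      ∑ n ∈ Finset.univ.filter (fun n => β (k + 1) n = -1), w k n)
    (hρ0 : ∀ k, 0 < ρ (k + 1)) (hρ1 : ∀ k, ρ (k + 1) < 1)
    (hα : ∀ k, α (k + 1) = (1 / q) * Real.log ((1 - ρ (k + 1)) / ρ (k + 1)))
    (hγ : ∀ k, γ (k + 1) = 1 / 2 - ρ (k + 1))
    (K : ℕ) (hK : 1 ≤ K)
    (hA : 0 < ∑ k ∈ Finset.range K, α (k + 1))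
    (θ : ℝ) (hθ : 0 < θ) :
    (1 / (N : ℝ)) *
        ((Finset.univ.filter (fun n : Fin N =>
          (∑ k ∈ Finset.range K, α (k + 1) * β (k + 1) n) /
            (∑ k ∈ Finset.range K, α (k + 1)) ≤ θ)).card : ℝ)
      ≤ Real.exp (θ * ∑ k ∈ Finset.range K, α (k + 1)) *
          ∏ k ∈ Finset.range K, Z (k + 1) := by
  have : Nonempty (Fin N) := ⟨⟨0, hN⟩⟩
  have hw : w 0 = (stdSimplex.barycenter : stdSimplex ℝ (Fin N)).val := by
    ext n
    simp [hw0]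
  simpa [hw0, mul_comm] using stmt_8_general ⟨hZ, hwrec⟩ (hw ▸ stdSimplex.barycenter.prop) hA θ
end

section
/- (Training Stability) Let q ≥ 2 and γ_k = 1/2 − ρ_k. Under the condition A_K > 0, for any θ > 0 it holds that (1/N)·|{n : m_K(n) > θ}| ≥ 1 − ∏_{k=1}^K δ(θ, γ_k), where δ(θ, γ) := (1−2γ)^{(1−θ)/q}·(1+2γ)^{(1+θ)/q} > 0. -/
/-!
Unrolling the recursion for the weights gives `w_K(n) ∏ Z_k = w_0(n) exp (-g_K(n))`, and `w_K` sums
to one, so `∏ Z_k` is the exponential moment `∑ w_0(n) exp (-g_K(n))`. By Chernoff's bound the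
initial mass of `{g_K ≤ θ A_K}` is at most `exp (θ A_K) ∏ Z_k = ∏ exp (θ α_k) Z_k`, and each factor
is at most `δ(θ, γ_k) = exp (θ α_k) (4 ρ_k (1 - ρ_k)) ^ (1 / q)`: factoring
`(ρ_k (1 - ρ_k)) ^ (1 / q)` out of `Z_k` leaves `ρ_k ^ s + (1 - ρ_k) ^ s` with
`s = 1 - 2 / q ∈ [0, 1)`, which is at most `2 ^ (1 - s) = 4 ^ (1 / q)` by concavity.
-/

open Finset Real

section RealInequalities

variable {u v : ℝ}

lemma rpow_add_rpow_le_two_rpow_mul_add_rpow {s : ℝ} (hs₀ : 0 ≤ s) (hs₁ : s ≤ 1)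
    (hu : 0 ≤ u) (hv : 0 ≤ v) : u ^ s + v ^ s ≤ 2 ^ (1 - s) * (u + v) ^ s := by
  have midpoint : 1 / 2 * u ^ s + 1 / 2 * v ^ s ≤ (1 / 2 * u + 1 / 2 * v) ^ s :=
    (concaveOn_rpow hs₀ hs₁).2 hu hv (by norm_num) (by norm_num) (by norm_num)
  calc u ^ s + v ^ s = 2 * (1 / 2 * u ^ s + 1 / 2 * v ^ s) := by ring
    _ ≤ 2 * (1 / 2 * u + 1 / 2 * v) ^ s := by gcongr
    _ = 2 * ((u + v) / 2) ^ s := by ring_nf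
    _ = 2 ^ (1 - s) * (u + v) ^ s := by
      rw [div_rpow (by positivity) two_pos.le, rpow_sub two_pos, rpow_one]
      ring

lemma mul_exp_neg_mul_log_div_eq (hu : 0 < u) (hv : 0 < v) (p : ℝ) :
    v * exp (-(p * log (v / u))) = (u * v) ^ p * v ^ (1 - 2 * p) := by
  rw [rpow_def_of_pos (mul_pos hu hv), rpow_def_of_pos hv, log_mul hu.ne' hv.ne',
    log_div hv.ne' hu.ne', ← exp_add]
  nth_rw 1 [← exp_log hv]
  rw [← exp_add]
  ring_nf

lemma mul_exp_neg_add_mul_exp_le {p : ℝ} (hp₀ : 0 ≤ p) (hp : p ≤ 1 / 2)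
    (hu : 0 < u) (hv : 0 < v) :
    v * exp (-(p * log (v / u))) + u * exp (p * log (v / u)) ≤
      (4 * (u * v)) ^ p * (u + v) ^ (1 - 2 * p) := by
  have log_swap : p * log (v / u) = -(p * log (u / v)) := by
    rw [log_div hv.ne' hu.ne', log_div hu.ne' hv.ne']
    ring
  have four_rpow : (4 : ℝ) ^ p = 2 ^ (1 - (1 - 2 * p)) := by
    rw [sub_sub_cancel, rpow_mul two_pos.le]
    norm_num
  calc v * exp (-(p * log (v / u))) + u * exp (p * log (v / u))
      = (u * v) ^ p * v ^ (1 - 2 * p) + (v * u) ^ p * u ^ (1 - 2 * p) := by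
        rw [mul_exp_neg_mul_log_div_eq hu hv, log_swap, mul_exp_neg_mul_log_div_eq hv hu]
    _ = (u * v) ^ p * (u ^ (1 - 2 * p) + v ^ (1 - 2 * p)) := by
        rw [mul_comm v u]
        ring
    _ ≤ (u * v) ^ p * (2 ^ (1 - (1 - 2 * p)) * (u + v) ^ (1 - 2 * p)) := by
        gcongr
        exact rpow_add_rpow_le_two_rpow_mul_add_rpow (by linarith) (by linarith) hu.le hv.le
    _ = (4 * (u * v)) ^ p * (u + v) ^ (1 - 2 * p) := by
        rw [← four_rpow, mul_rpow (by norm_num) (mul_pos hu hv).le]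
        ring

end RealInequalities

/-- The factor `δ(θ, γ)` that an epoch with edge `γ = 1/2 - ρ` contributes to the bound. -/
noncomputable def stabilityFactor (q θ γ : ℝ) : ℝ :=
  (1 - 2 * γ) ^ ((1 - θ) / q) * (1 + 2 * γ) ^ ((1 + θ) / q)

lemma stabilityFactor_half_sub {ρ : ℝ} (hρ₀ : 0 < ρ) (hρ₁ : ρ < 1) (q θ : ℝ) :
    stabilityFactor q θ (1 / 2 - ρ) =
      exp (θ * (1 / q * log ((1 - ρ) / ρ))) * (4 * (ρ * (1 - ρ))) ^ (1 / q) := by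
  have hσ : 0 < 1 - ρ := sub_pos.mpr hρ₁
  have log_four : log 4 = 2 * log 2 := by
    rw [show (4 : ℝ) = 2 ^ 2 by norm_num, log_pow, Nat.cast_ofNat]
  rw [stabilityFactor, show 1 - 2 * (1 / 2 - ρ) = 2 * ρ by ring,
    show 1 + 2 * (1 / 2 - ρ) = 2 * (1 - ρ) by ring,
    rpow_def_of_pos (by positivity), rpow_def_of_pos (by positivity),
    rpow_def_of_pos (by positivity), log_mul two_ne_zero hρ₀.ne', log_mul two_ne_zero hσ.ne',
    log_mul four_ne_zero (by positivity), log_mul hρ₀.ne' hσ.ne', log_div hσ.ne' hρ₀.ne',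
    log_four, ← exp_add, ← exp_add]
  ring_nf

lemma stabilityFactor_half_sub_pos {ρ : ℝ} (hρ₀ : 0 < ρ) (hρ₁ : ρ < 1) (q θ : ℝ) :
    0 < stabilityFactor q θ (1 / 2 - ρ) := by
  have : 0 < 1 - ρ := sub_pos.mpr hρ₁
  rw [stabilityFactor_half_sub hρ₀ hρ₁]
  positivity

lemma sum_filter_le_exp_mul_sum_exp_neg {ι : Type*} {s : Finset ι} {w : ι → ℝ}
    (hw : ∀ n ∈ s, 0 ≤ w n) (f : ι → ℝ) (c : ℝ) :
    ∑ n ∈ s with f n ≤ c, w n ≤ exp c * ∑ n ∈ s, w n * exp (-f n) := by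
  rw [sum_filter, mul_sum]
  refine sum_le_sum fun n hns ↦ ?_
  have factor_out : exp c * (w n * exp (-f n)) = w n * exp (c - f n) := by
    rw [sub_eq_add_neg, exp_add]
    ring
  rw [factor_out]
  split_ifs with hn
  · exact le_mul_of_one_le_right (hw n hns) (one_le_exp (sub_nonneg.mpr hn))
  · exact mul_nonneg (hw n hns) (exp_pos _).le

section Normalizer

variable {ι : Type*} [Fintype ι]

/-- The normalizer `Z` of an epoch with learning rate `a`, labels `b` and previous weights `w`. -/
noncomputable def normalizer (w b : ι → ℝ) (a : ℝ) : ℝ :=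
  ∑ n, w n * exp (-a * b n)

lemma normalizer_eq {b : ι → ℝ} (hb : ∀ n, b n = 1 ∨ b n = -1) (w : ι → ℝ) (a : ℝ) :
    normalizer w b a =
      (∑ n, w n - ∑ n with b n = -1, w n) * exp (-a) + (∑ n with b n = -1, w n) * exp a := by
  have easy_mass : ∑ n, w n - ∑ n with b n = -1, w n = ∑ n with b n ≠ -1, w n :=
    sub_eq_of_eq_add' (sum_filter_add_sum_filter_not _ _ _).symm
  rw [normalizer, ← sum_filter_not_add_sum_filter _ (fun n ↦ b n = -1), easy_mass, sum_mul, sum_mul]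
  congr 1 <;> refine sum_congr rfl fun n hn ↦ ?_
  · rw [(hb n).resolve_right (mem_filter.mp hn).2, mul_one]
  · rw [(mem_filter.mp hn).2, neg_mul_neg, mul_one]

end Normalizer

/-- A run of the APW scheme on the samples `ι` from an arbitrary initial probability vector `w 0`.
Epochs are counted from zero: `β k`, `α k` and `ρ k` belong to the epoch that turns `w k` into
`w (k + 1)`, so they are the paper's `β_{k+1}`, `α_{k+1}` and `ρ_{k+1}`. -/
structure IsAPWRun {ι : Type*} [Fintype ι] (q : ℝ) (β w : ℕ → ι → ℝ) (α ρ : ℕ → ℝ) : Prop where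
  label_eq : ∀ k n, β k n = 1 ∨ β k n = -1
  initial_nonneg : ∀ n, 0 ≤ w 0 n
  initial_sum : ∑ n, w 0 n = 1
  weight_succ : ∀ k n, w (k + 1) n = w k n * exp (-α k * β k n) / normalizer (w k) (β k) (α k)
  hardMass_eq : ∀ k, ρ k = ∑ n with β k n = -1, w k n
  hardMass_pos : ∀ k, 0 < ρ k
  hardMass_lt_one : ∀ k, ρ k < 1
  rate_eq : ∀ k, α k = 1 / q * log ((1 - ρ k) / ρ k)

namespace IsAPWRun

variable {ι : Type*} [Fintype ι] {q : ℝ} {β w : ℕ → ι → ℝ} {α ρ : ℕ → ℝ}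

lemma normalizer_eq_of_sum_eq_one (h : IsAPWRun q β w α ρ) {k : ℕ} (hk : ∑ n, w k n = 1) :
    normalizer (w k) (β k) (α k) = (1 - ρ k) * exp (-α k) + ρ k * exp (α k) := by
  rw [normalizer_eq (h.label_eq k), hk, h.hardMass_eq]

lemma normalizer_pos_of_sum_eq_one (h : IsAPWRun q β w α ρ) {k : ℕ} (hk : ∑ n, w k n = 1) :
    0 < normalizer (w k) (β k) (α k) := by
  have hard_pos : 0 < ρ k := h.hardMass_pos k
  have easy_pos : 0 < 1 - ρ k := sub_pos.mpr (h.hardMass_lt_one k)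
  rw [h.normalizer_eq_of_sum_eq_one hk]
  positivity

lemma sum_weight (h : IsAPWRun q β w α ρ) (k : ℕ) : ∑ n, w k n = 1 := by
  induction k with
  | zero => exact h.initial_sum
  | succ k ih =>
    simp only [h.weight_succ]
    rw [← sum_div, ← normalizer, div_self (h.normalizer_pos_of_sum_eq_one ih).ne']

lemma normalizer_pos (h : IsAPWRun q β w α ρ) (k : ℕ) : 0 < normalizer (w k) (β k) (α k) :=
  h.normalizer_pos_of_sum_eq_one (h.sum_weight k)

lemma weight_mul_prod_normalizer (h : IsAPWRun q β w α ρ) (K : ℕ) (n : ι) :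
    w K n * ∏ k ∈ range K, normalizer (w k) (β k) (α k) =
      w 0 n * exp (-∑ k ∈ range K, α k * β k n) := by
  induction K with
  | zero => simp
  | succ K ih =>
    have step : w (K + 1) n * normalizer (w K) (β K) (α K) = w K n * exp (-α K * β K n) := by
      rw [h.weight_succ, div_mul_cancel₀ _ (h.normalizer_pos K).ne']
    rw [prod_range_succ, sum_range_succ, neg_add, exp_add, ← neg_mul]
    linear_combination (∏ k ∈ range K, normalizer (w k) (β k) (α k)) * step +
      exp (-α K * β K n) * ih

lemma sum_initial_mul_exp_neg (h : IsAPWRun q β w α ρ) (K : ℕ) :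
    ∑ n, w 0 n * exp (-∑ k ∈ range K, α k * β k n) =
      ∏ k ∈ range K, normalizer (w k) (β k) (α k) := by
  simp only [← h.weight_mul_prod_normalizer]
  rw [← sum_mul, h.sum_weight, one_mul]

lemma exp_mul_normalizer_le (h : IsAPWRun q β w α ρ) (hq : 2 ≤ q) (θ : ℝ) (k : ℕ) :
    exp (θ * α k) * normalizer (w k) (β k) (α k) ≤ stabilityFactor q θ (1 / 2 - ρ k) := by
  have normalizer_le : normalizer (w k) (β k) (α k) ≤ (4 * (ρ k * (1 - ρ k))) ^ (1 / q) := by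
    rw [h.normalizer_eq_of_sum_eq_one (h.sum_weight k), h.rate_eq]
    simpa only [add_sub_cancel, one_rpow, mul_one] using
      mul_exp_neg_add_mul_exp_le (p := 1 / q) (by positivity)
        (one_div_le_one_div_of_le two_pos hq) (h.hardMass_pos k)
        (sub_pos.mpr (h.hardMass_lt_one k))
  rw [stabilityFactor_half_sub (h.hardMass_pos k) (h.hardMass_lt_one k), ← h.rate_eq]
  gcongr

lemma sum_initial_low_margin_le (h : IsAPWRun q β w α ρ) (hq : 2 ≤ q) (K : ℕ) (θ : ℝ) :
    ∑ n with ∑ k ∈ range K, α k * β k n ≤ θ * ∑ k ∈ range K, α k, w 0 n ≤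
      ∏ k ∈ range K, stabilityFactor q θ (1 / 2 - ρ k) :=
  calc _ ≤ exp (θ * ∑ k ∈ range K, α k) * ∑ n, w 0 n * exp (-∑ k ∈ range K, α k * β k n) :=
        sum_filter_le_exp_mul_sum_exp_neg (fun n _ ↦ h.initial_nonneg n) _ _
    _ = ∏ k ∈ range K, exp (θ * α k) * normalizer (w k) (β k) (α k) := by
        rw [h.sum_initial_mul_exp_neg, mul_sum, exp_sum, prod_mul_distrib]
    _ ≤ ∏ k ∈ range K, stabilityFactor q θ (1 / 2 - ρ k) :=
        prod_le_prod (fun k _ ↦ mul_nonneg (exp_pos _).le (h.normalizer_pos k).le)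
          fun k _ ↦ h.exp_mul_normalizer_le hq θ k

end IsAPWRun

theorem stmt_11_general {ι : Type*} [Fintype ι] {q : ℝ} {β w : ℕ → ι → ℝ} {α ρ : ℕ → ℝ}
    (h : IsAPWRun q β w α ρ) (hq : 2 ≤ q) {K : ℕ} (hA : 0 < ∑ k ∈ range K, α k) (θ : ℝ) :
    (∀ k ∈ range K, 0 < stabilityFactor q θ (1 / 2 - ρ k)) ∧
    1 - ∏ k ∈ range K, stabilityFactor q θ (1 / 2 - ρ k) ≤
      ∑ n with θ < (∑ k ∈ range K, α k * β k n) / ∑ k ∈ range K, α k, w 0 n := by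
  refine ⟨fun k _ ↦ stabilityFactor_half_sub_pos (h.hardMass_pos k) (h.hardMass_lt_one k) q θ, ?_⟩
  have split := sum_filter_not_add_sum_filter univ
    (fun n ↦ θ < (∑ k ∈ range K, α k * β k n) / ∑ k ∈ range K, α k) (w 0)
  simp only [not_lt, div_le_iff₀ hA, h.initial_sum] at split
  linarith [h.sum_initial_low_margin_le hq K θ]

/-- Training Stability (Theorem): under `A_K > 0`, for any `θ > 0`,
`(1/N)·|{n : m_K(n) > θ}| ≥ 1 − ∏_{k=1}^K δ(θ, γ_k)`, where
`δ(θ, γ) = (1−2γ)^{(1−θ)/q}·(1+2γ)^{(1+θ)/q} > 0`. -/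
theorem stmt_11 (N : ℕ) (hN : 1 ≤ N) (q : ℝ) (hq : 2 ≤ q)
    (β : ℕ → Fin N → ℝ) (α ρ γ Z : ℕ → ℝ) (w : ℕ → Fin N → ℝ)
    (hβ : ∀ k n, β (k + 1) n = 1 ∨ β (k + 1) n = -1)
    (hw0 : ∀ n, w 0 n = 1 / N)
    (hZ : ∀ k, Z (k + 1) = ∑ n, w k n * Real.exp (-(α (k + 1)) * β (k + 1) n))
    (hwrec : ∀ k n,
      w (k + 1) n = w k n * Real.exp (-(α (k + 1)) * β (k + 1) n) / Z (k + 1))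
    (hρ : ∀ k, ρ (k + 1) =
      ∑ n ∈ Finset.univ.filter (fun n => β (k + 1) n = -1), w k n)
    (hρ0 : ∀ k, 0 < ρ (k + 1)) (hρ1 : ∀ k, ρ (k + 1) < 1)
    (hα : ∀ k, α (k + 1) = (1 / q) * Real.log ((1 - ρ (k + 1)) / ρ (k + 1)))
    (hγ : ∀ k, γ (k + 1) = 1 / 2 - ρ (k + 1))
    (K : ℕ) (hK : 1 ≤ K)
    (hA : 0 < ∑ k ∈ Finset.range K, α (k + 1))
    (θ : ℝ) (hθ : 0 < θ) :
    (∀ k ∈ Finset.range K,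
      0 < (1 - 2 * γ (k + 1)) ^ ((1 - θ) / q) *
            (1 + 2 * γ (k + 1)) ^ ((1 + θ) / q)) ∧
    1 - ∏ k ∈ Finset.range K,
          (1 - 2 * γ (k + 1)) ^ ((1 - θ) / q) *
            (1 + 2 * γ (k + 1)) ^ ((1 + θ) / q)
      ≤ (1 / (N : ℝ)) *
          ((Finset.univ.filter (fun n : Fin N =>
            θ < (∑ k ∈ Finset.range K, α (k + 1) * β (k + 1) n) /
              (∑ k ∈ Finset.range K, α (k + 1)))).card : ℝ) := by
  have run : IsAPWRun q (fun k ↦ β (k + 1)) w (fun k ↦ α (k + 1)) (fun k ↦ ρ (k + 1)) :=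
    ⟨hβ, fun n ↦ by rw [hw0]; positivity, by simp [hw0, Nat.one_le_iff_ne_zero.mp hN],
      fun k n ↦ by rw [hwrec, hZ, normalizer], hρ, hρ0, hρ1, hα⟩
  simpa only [stabilityFactor, hγ, hw0, sum_const, nsmul_eq_mul, mul_comm (1 / (N : ℝ))]
    using stmt_11_general run hq hA θ
end

section
/- Let q ≥ 2 and let γ_{K+1}, …, γ_{K+Δ} be real numbers in (0, 1/2) with γ_min := min{γ_{K+1}, …, γ_{K+Δ}}. For any θ with 0 < θ ≤ γ_k < 1/2 and any k ∈ {K+1, …, K+Δ}, it holds that δ(θ, γ_k) ≤ δ(γ_k, γ_k) ≤ δ(γ_min, γ_min) < 1, where δ(θ, γ) := (1−2γ)^{(1−θ)/q}·(1+2γ)^{(1+θ)/q}. -/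
/-!
For `0 < γ < 1 / 2`, the function `q · log δ(θ, γ)` is affine in `θ` with slope
`log (1 + 2γ) - log (1 - 2γ) > 0`. Its restriction to the diagonal `θ = γ` vanishes at `γ = 0` and
has derivative `u - sinh u < 0`, where `u = log ((1 + 2γ) / (1 - 2γ)) > 0`.
-/

open Set

/-- The quantity `δ(θ, γ)`, with the parameter `q` made explicit. For `q = 2` it is the factor which
a boosting round of edge `γ` contributes to the AdaBoost bound on the proportion of examples of
margin at most `θ`. -/
noncomputable def marginFactor (q θ γ : ℝ) : ℝ :=
  (1 - 2 * γ) ^ ((1 - θ) / q) * (1 + 2 * γ) ^ ((1 + θ) / q)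

/-- The quantity `q · log δ(θ, γ)`, which does not depend on `q`; this reading is valid for
`|γ| < 1 / 2` and `q ≠ 0`. -/
noncomputable def marginExponent (θ γ : ℝ) : ℝ :=
  (1 - θ) * Real.log (1 - 2 * γ) + (1 + θ) * Real.log (1 + 2 * γ)

theorem marginFactor_eq_exp (q θ : ℝ) {γ : ℝ} (hγ : γ ∈ Ioo (-(1 / 2)) (1 / 2)) :
    marginFactor q θ γ = Real.exp (marginExponent θ γ / q) := by
  obtain ⟨hγ_lower, hγ_upper⟩ := hγ
  rw [marginFactor, marginExponent, Real.rpow_def_of_pos (by linarith),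
    Real.rpow_def_of_pos (by linarith), ← Real.exp_add]
  ring_nf

theorem marginExponent_strictMono {γ : ℝ} (hγ : γ ∈ Ioo 0 (1 / 2)) :
    StrictMono fun θ ↦ marginExponent θ γ := by
  intro θ₁ θ₂ hθ
  obtain ⟨hγ_pos, hγ_lt⟩ := hγ
  have slope_pos : 0 < Real.log (1 + 2 * γ) - Real.log (1 - 2 * γ) :=
    sub_pos.2 (Real.log_lt_log (by linarith) (by linarith))
  have increment_pos := mul_pos (sub_pos.2 hθ) slope_pos
  simp only [marginExponent]
  linarith

theorem hasDerivAt_marginExponent_self {γ : ℝ} (hγ : γ ∈ Ioo (-(1 / 2)) (1 / 2)) :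
    HasDerivAt (fun x ↦ marginExponent x x)
      (Real.log ((1 + 2 * γ) / (1 - 2 * γ)) -
        Real.sinh (Real.log ((1 + 2 * γ) / (1 - 2 * γ)))) γ := by
  have hsub : 0 < 1 - 2 * γ := by linarith [hγ.2]
  have hadd : 0 < 1 + 2 * γ := by linarith [hγ.1]
  have hid := hasDerivAt_id' γ
  have hleft := (hid.const_sub 1).mul (((hid.const_mul 2).const_sub 1).log hsub.ne')
  have hright := (hid.const_add 1).mul (((hid.const_mul 2).const_add 1).log hadd.ne')
  refine (hleft.add hright).congr_deriv ?_
  rw [Real.sinh_log (div_pos hadd hsub), Real.log_div hadd.ne' hsub.ne']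
  field_simp
  ring

theorem marginExponent_self_strictAntiOn :
    StrictAntiOn (fun γ ↦ marginExponent γ γ) (Ico 0 (1 / 2)) := by
  have hderiv {γ : ℝ} (hγ : γ ∈ Ico 0 (1 / 2)) :=
    hasDerivAt_marginExponent_self (γ := γ) ⟨by linarith [hγ.1], hγ.2⟩
  refine strictAntiOn_of_deriv_neg (convex_Ico _ _)
    (fun γ hγ ↦ (hderiv hγ).continuousAt.continuousWithinAt) fun γ hγ ↦ ?_
  rw [(hderiv (interior_subset hγ)).deriv, sub_neg, Real.self_lt_sinh_iff]
  obtain ⟨hγ_pos, hγ_lt⟩ := interior_Ico.subset hγ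
  exact Real.log_pos ((one_lt_div (by linarith)).2 (by linarith))

theorem marginFactor_strictMono {q γ : ℝ} (hq : 0 < q) (hγ : γ ∈ Ioo 0 (1 / 2)) :
    StrictMono fun θ ↦ marginFactor q θ γ := by
  intro θ₁ θ₂ hθ
  have hγ' : γ ∈ Ioo (-(1 / 2)) (1 / 2) := ⟨by linarith [hγ.1], hγ.2⟩
  simp only [marginFactor_eq_exp q _ hγ']
  exact Real.exp_lt_exp.2 (div_lt_div_of_pos_right (marginExponent_strictMono hγ hθ) hq)

theorem marginFactor_self_strictAntiOn {q : ℝ} (hq : 0 < q) :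
    StrictAntiOn (fun γ ↦ marginFactor q γ γ) (Ico 0 (1 / 2)) := by
  intro γ₁ hγ₁ γ₂ hγ₂ hlt
  have hsubset : Ico (0 : ℝ) (1 / 2) ⊆ Ioo (-(1 / 2)) (1 / 2) :=
    Ico_subset_Ioo_left (by norm_num)
  simp only [marginFactor_eq_exp q _ (hsubset hγ₁), marginFactor_eq_exp q _ (hsubset hγ₂)]
  exact Real.exp_lt_exp.2
    (div_lt_div_of_pos_right (marginExponent_self_strictAntiOn hγ₁ hγ₂ hlt) hq)

theorem marginFactor_zero_right (q θ : ℝ) : marginFactor q θ 0 = 1 := by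
  simp [marginFactor]

theorem marginFactor_self_lt_one {q γ : ℝ} (hq : 0 < q) (hγ : γ ∈ Ioo 0 (1 / 2)) :
    marginFactor q γ γ < 1 := by
  simpa only [marginFactor_zero_right] using
    marginFactor_self_strictAntiOn hq (left_mem_Ico.2 one_half_pos) (Ioo_subset_Ico_self hγ) hγ.1

theorem stmt_12_general {q θ γ γmin : ℝ} (hq : 0 < q) (hγmin : 0 < γmin) (hle : γmin ≤ γ)
    (hγ : γ < 1 / 2) (hθ : θ ≤ γ) :
    marginFactor q θ γ ≤ marginFactor q γ γ ∧
      marginFactor q γ γ ≤ marginFactor q γmin γmin ∧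
      marginFactor q γmin γmin < 1 := by
  have hγ_mem : γ ∈ Ioo 0 (1 / 2) := ⟨hγmin.trans_le hle, hγ⟩
  have hγmin_mem : γmin ∈ Ioo 0 (1 / 2) := ⟨hγmin, hle.trans_lt hγ⟩
  exact ⟨(marginFactor_strictMono hq hγ_mem).monotone hθ,
    (marginFactor_self_strictAntiOn hq).antitoneOn (Ioo_subset_Ico_self hγmin_mem)
      (Ioo_subset_Ico_self hγ_mem) hle,
    marginFactor_self_lt_one hq hγmin_mem⟩

/-- Lemma on `δ(θ, γ) = (1−2γ)^{(1−θ)/q}·(1+2γ)^{(1+θ)/q}`: for `q ≥ 2`,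
`γ_{K+1}, …, γ_{K+Δ} ∈ (0, 1/2)` with minimum `γ_min`, and any
`0 < θ ≤ γ_k < 1/2` with `k ∈ {K+1, …, K+Δ}`:
`δ(θ, γ_k) ≤ δ(γ_k, γ_k) ≤ δ(γ_min, γ_min) < 1`. -/
theorem stmt_12 (q : ℝ) (hq : 2 ≤ q) (K Δ : ℕ) (hΔ : 1 ≤ Δ)
    (γ : ℕ → ℝ)
    (hγ : ∀ k, K + 1 ≤ k → k ≤ K + Δ → 0 < γ k ∧ γ k < 1 / 2)
    (γmin : ℝ)
    (hmin : IsLeast {x : ℝ | ∃ k, K + 1 ≤ k ∧ k ≤ K + Δ ∧ γ k = x} γmin)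
    (θ : ℝ) (k : ℕ) (hk1 : K + 1 ≤ k) (hk2 : k ≤ K + Δ)
    (hθ0 : 0 < θ) (hθγ : θ ≤ γ k) (hγk : γ k < 1 / 2) :
    ((1 - 2 * γ k) ^ ((1 - θ) / q) * (1 + 2 * γ k) ^ ((1 + θ) / q)
        ≤ (1 - 2 * γ k) ^ ((1 - γ k) / q) * (1 + 2 * γ k) ^ ((1 + γ k) / q)) ∧
    ((1 - 2 * γ k) ^ ((1 - γ k) / q) * (1 + 2 * γ k) ^ ((1 + γ k) / q)
        ≤ (1 - 2 * γmin) ^ ((1 - γmin) / q) * (1 + 2 * γmin) ^ ((1 + γmin) / q)) ∧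
    ((1 - 2 * γmin) ^ ((1 - γmin) / q) * (1 + 2 * γmin) ^ ((1 + γmin) / q) < 1) := by
  obtain ⟨⟨m, hm1, hm2, rfl⟩, hleast⟩ := hmin
  exact stmt_12_general (by linarith) (hγ m hm1 hm2).1 (hleast ⟨k, hk1, hk2, rfl⟩) hγk hθγ
end
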